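/- Assume the GO condition holds. Let λ ≠ μ, let p ⊆ ker(A − λ·id) and p' ⊆ ker(A − μ·id) be subspaces with [h, p] ⊆ p and [h, p'] ⊆ p'. Then [X, Y] ∈ p + p' for all X ∈ p and Y ∈ p' (i.e. [p, p'] ⊆ p + p'). -/

import Mathlib

/-
Setting: a finite-dimensional real Lie algebra `g` with an ad-invariant inner
product (encoded as a positive definite symmetric bilinear form `B`), a Lie
subalgebra `h`, the orthogonal complement `m = h^⊥`, and the metric
endomorphism `A : m → m` (encoded as a linear map of `g` preserving `m`) which
is symmetric, positive definite and `h`-equivariant on `m`.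
-/

/-!
Apply the geodesic orbit condition to `X + Y` with `X ∈ p` and `Y ∈ p'`: some `H ∈ h` satisfies
`⁅H + (X + Y), A (X + Y)⁆ ∈ h`. Up to elements of `p + p'` this bracket is `(b - a) • ⁅X, Y⁆`, where
`a ≠ b` are the two eigenvalues. As `A` is symmetric, `p` and `p'` are orthogonal, so invariance of
the form puts `⁅X, Y⁆` in `m = h^⊥`. The bracket therefore lies in `h ∩ m = 0`, and `⁅X, Y⁆` can be
solved for.
-/

section BilinForm

variable {R M : Type*} [CommRing R] [AddCommGroup M] [Module R M] {B : LinearMap.BilinForm R M}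

theorem apply_eq_zero_of_mem_eigenspace_of_ne [NoZeroDivisors R] {A : Module.End R M} {a b : R}
    (hab : a ≠ b) {x y : M} (hx : x ∈ A.eigenspace a) (hy : y ∈ A.eigenspace b)
    (hA : B (A x) y = B x (A y)) : B x y = 0 := by
  rw [Module.End.mem_eigenspace_iff] at hx hy
  have hmul : a * B x y = b * B x y := by simpa [hx, hy] using hA
  exact (mul_eq_mul_right_iff.mp hmul).resolve_left hab

theorem disjoint_orthogonal_of_anisotropic (hB : ∀ x, B x x = 0 → x = 0) (W : Submodule R M) :
    Disjoint W (B.orthogonal W) :=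
  Submodule.disjoint_def.mpr fun x hx hx' => hB x (hx' x hx)

end BilinForm

section LieAlgebra

variable {R L : Type*} [CommRing R] [LieRing L] [LieAlgebra R L]

theorem apply_lie_apply_of_lieInvariant {B : LinearMap.BilinForm R L} (hB : B.lieInvariant L)
    (x y z : L) : B ⁅x, y⁆ z = B x ⁅y, z⁆ := by
  rw [← lie_skew, map_neg, LinearMap.neg_apply, hB, neg_neg]

theorem lie_add_apply_add_of_mem_eigenspace {A : Module.End R L} {a b : R} {x y : L}
    (hx : x ∈ A.eigenspace a) (hy : y ∈ A.eigenspace b) (z : L) :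
    ⁅z + (x + y), A (x + y)⁆ = a • ⁅z, x⁆ + b • ⁅z, y⁆ + (b - a) • ⁅x, y⁆ := by
  rw [Module.End.mem_eigenspace_iff] at hx hy
  simp only [map_add, hx, hy, add_lie, lie_add, lie_smul, lie_self]
  rw [← lie_skew x y]
  module

/-- The geodesic orbit (GO) condition: each `x ∈ m` is completed by some `z ∈ h` to the generator of
a homogeneous geodesic of the metric with metric endomorphism `A` on `m`. Here `A` is an
endomorphism of the whole Lie algebra, of which only the restriction to `m` matters. -/
def IsGeodesicOrbit (h : LieSubalgebra R L) (m : Submodule R L) (A : Module.End R L) : Prop :=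
  ∀ x ∈ m, ∃ z ∈ h, ⁅z + x, A x⁆ ∈ h

theorem IsGeodesicOrbit.exists_smul_lie_eq {h : LieSubalgebra R L} {m : Submodule R L}
    {A : Module.End R L} (hGO : IsGeodesicOrbit h m A) (hhm : Disjoint h.toSubmodule m)
    {p p' : LieSubmodule R h L} (hpm : p.toSubmodule ≤ m) (hpm' : p'.toSubmodule ≤ m)
    {a b : R} {x y : L} (hx : x ∈ p) (hxa : x ∈ A.eigenspace a) (hy : y ∈ p')
    (hyb : y ∈ A.eigenspace b) (hxy : ⁅x, y⁆ ∈ m) :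
    ∃ z : h, (a - b) • ⁅x, y⁆ = a • ⁅z, x⁆ + b • ⁅z, y⁆ := by
  obtain ⟨z, hz, hmem_h⟩ := hGO (x + y) (m.add_mem (hpm hx) (hpm' hy))
  lift z to h using hz
  rw [lie_add_apply_add_of_mem_eigenspace hxa hyb] at hmem_h
  have hmem_m : a • ⁅(z : L), x⁆ + b • ⁅(z : L), y⁆ + (b - a) • ⁅x, y⁆ ∈ m :=
    m.add_mem
      (m.add_mem (m.smul_mem a (hpm (p.lie_mem hx))) (m.smul_mem b (hpm' (p'.lie_mem hy))))
      (m.smul_mem _ hxy)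
  have hzero := Submodule.disjoint_def.mp hhm _ hmem_h hmem_m
  refine ⟨z, ?_⟩
  rw [← neg_sub b a, neg_smul]
  exact (eq_neg_of_add_eq_zero_left hzero).symm

end LieAlgebra

theorem stmt_5_general {K L : Type*} [Field K] [LieRing L] [LieAlgebra K L]
    {B : LinearMap.BilinForm K L} (hB : B.lieInvariant L) {h : LieSubalgebra K L}
    (hh : Disjoint h.toSubmodule (B.orthogonal h.toSubmodule)) {A : Module.End K L}
    (hA : ∀ x ∈ B.orthogonal h.toSubmodule, ∀ y ∈ B.orthogonal h.toSubmodule,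
      B (A x) y = B x (A y))
    (hGO : IsGeodesicOrbit h (B.orthogonal h.toSubmodule) A) {a b : K} (hab : a ≠ b)
    {p p' : LieSubmodule K h L} (hpm : p.toSubmodule ≤ B.orthogonal h.toSubmodule)
    (hpm' : p'.toSubmodule ≤ B.orthogonal h.toSubmodule)
    (hpa : p.toSubmodule ≤ A.eigenspace a) (hpb : p'.toSubmodule ≤ A.eigenspace b) :
    ∀ x ∈ p, ∀ y ∈ p', ⁅x, y⁆ ∈ p ⊔ p' := by
  intro x hx y hy
  have horth : ∀ w ∈ p, B w y = 0 := fun w hw =>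
    apply_eq_zero_of_mem_eigenspace_of_ne hab (hpa hw) (hpb hy) (hA w (hpm hw) y (hpm' hy))
  have hxy : ⁅x, y⁆ ∈ B.orthogonal h.toSubmodule := fun z hz =>
    calc B z ⁅x, y⁆ = B ⁅z, x⁆ y := (apply_lie_apply_of_lieInvariant hB z x y).symm
      _ = 0 := horth ⁅z, x⁆ (p.lie_mem (x := ⟨z, hz⟩) hx)
  obtain ⟨z, hz⟩ := hGO.exists_smul_lie_eq hh hpm hpm' hx (hpa hx) hy (hpb hy) hxy
  have hsmul : (a - b) • ⁅x, y⁆ ∈ p ⊔ p' := hz ▸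
    add_mem ((p ⊔ p').smul_mem a (LieSubmodule.mem_sup_left (p.lie_mem hx)))
      ((p ⊔ p').smul_mem b (LieSubmodule.mem_sup_right (p'.lie_mem hy)))
  exact ((p ⊔ p').toSubmodule.smul_mem_iff (sub_ne_zero.mpr hab)).mp hsmul

/-- In a GO-space, brackets of `ad h`-invariant subspaces of distinct eigenspaces of `A` satisfy `[p, p′] ⊆ p + p′`. -/
theorem stmt_5
    {g : Type*} [LieRing g] [LieAlgebra ℝ g] [FiniteDimensional ℝ g]
    (B : g →ₗ[ℝ] g →ₗ[ℝ] ℝ)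
    (hBsymm : ∀ X Y : g, B X Y = B Y X)
    (hBpos : ∀ X : g, X ≠ 0 → 0 < B X X)
    (hBinv : ∀ Z X Y : g, B ⁅Z, X⁆ Y + B X ⁅Z, Y⁆ = 0)
    (h : LieSubalgebra ℝ g)
    (m : Submodule ℝ g) (hm : ∀ X : g, X ∈ m ↔ ∀ H ∈ h, B X H = 0)
    (A : g →ₗ[ℝ] g)
    (hAm : ∀ X ∈ m, A X ∈ m)
    (hAsymm : ∀ X ∈ m, ∀ Y ∈ m, B (A X) Y = B X (A Y))
    (hApos : ∀ X ∈ m, X ≠ 0 → 0 < B (A X) X)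
    (hAequiv : ∀ H ∈ h, ∀ X ∈ m, A ⁅H, X⁆ = ⁅H, A X⁆)
    (hGO : ∀ X ∈ m, ∃ H ∈ h, ⁅H + X, A X⁆ ∈ h)
    (lam mu : ℝ) (hne : lam ≠ mu)
    (p p' : Submodule ℝ g) (hpm : p ≤ m) (hp'm : p' ≤ m)
    (hpe : ∀ X ∈ p, A X = lam • X) (hp'e : ∀ Y ∈ p', A Y = mu • Y)
    (hph : ∀ H ∈ h, ∀ X ∈ p, ⁅H, X⁆ ∈ p)
    (hp'h : ∀ H ∈ h, ∀ Y ∈ p', ⁅H, Y⁆ ∈ p') :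
    ∀ X ∈ p, ∀ Y ∈ p', ⁅X, Y⁆ ∈ p ⊔ p' := by
  obtain rfl : m = LinearMap.BilinForm.orthogonal B h.toSubmodule := by
    ext X
    simp only [hm, hBsymm X]
    rfl
  have hdisj := disjoint_orthogonal_of_anisotropic (B := B)
    (fun X hX => by_contra fun hX0 => (hBpos X hX0).ne' hX) h.toSubmodule
  let P : LieSubmodule ℝ h g := { p with lie_mem := fun {H X} hX => hph H H.2 X hX }
  let P' : LieSubmodule ℝ h g := { p' with lie_mem := fun {H Y} hY => hp'h H H.2 Y hY }
  intro X hX Y hY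
  have hXY : ⁅X, Y⁆ ∈ P ⊔ P' :=
    stmt_5_general (fun Z U V => eq_neg_of_add_eq_zero_left (hBinv Z U V)) hdisj hAsymm hGO hne
      hpm hp'm (fun U hU => Module.End.mem_eigenspace_iff.mpr (hpe U hU))
      (fun V hV => Module.End.mem_eigenspace_iff.mpr (hp'e V hV)) X hX Y hY
  rwa [← LieSubmodule.mem_toSubmodule, LieSubmodule.sup_toSubmodule] at hXY
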